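/- arXiv:math/0606143 — 2 statements merged into one kernel-verified Lean document; each statement's English description precedes it below -/
import Mathlib

section
/- Let (G,L) be a graph/list pair, v a node with neighbors v_1,…,v_m (m ≥ 1) listed in a fixed order, and j a color. Suppose Z(G_v, L_{k,j}) > 0 for every 1 ≤ k ≤ m (note L_{1,j} = L restricted to G_v). Then the number of proper list colorings of (G_v, L) in which none of v_1,…,v_{k−1} receives color j equals Z(G_v, L_{k,j}) for each k, and P_{G_v,L}( c(v_k) ≠ j for all 1 ≤ k ≤ m ) = ∏_{k=1}^{m} P_{G_v, L_{k,j}}( c(v_k) ≠ j ) = ∏_{k=1}^{m} ( 1 − P_{G_v, L_{k,j}}( c(v_k) = j ) ). -/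
open scoped Classical

/-- The set of proper list colorings of the graph/list pair `(G, L)`. -/
def properColorings {V : Type} (G : SimpleGraph V) (L : V → Finset ℕ) : Set (V → ℕ) :=
  {c | (∀ v, c v ∈ L v) ∧ ∀ u w, G.Adj u w → c u ≠ c w}

/-- `Z(G,L)`: the number of proper list colorings. -/
noncomputable def numColorings {V : Type} (G : SimpleGraph V) (L : V → Finset ℕ) : ℕ :=
  (properColorings G L).ncard

/-- `P_{G,L}(E)`: probability of the event `E` under the uniform distribution on
proper list colorings. -/
noncomputable def colorProb {V : Type} (G : SimpleGraph V) (L : V → Finset ℕ)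
    (E : Set (V → ℕ)) : ℝ :=
  ((properColorings G L ∩ E).ncard : ℝ) / (numColorings G L : ℝ)

/-- The graph `G_v`: `G` with the node `v` deleted. -/
def Gdel {V : Type} (G : SimpleGraph V) (v : V) : SimpleGraph {u : V // u ≠ v} :=
  SimpleGraph.comap Subtype.val G

/-- The list vector `L_{k,j}`: the color `j` is deleted from the lists of the neighbors
`v_r` of `v` with `1 ≤ r < k` (here `w` lists the neighbors in a fixed order, `0`-indexed),
all other lists are unchanged. -/
noncomputable def Lki {V : Type} (L : V → Finset ℕ) (v : V) {m : ℕ} (w : Fin m → V)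
    (k : ℕ) (j : ℕ) : {u : V // u ≠ v} → Finset ℕ :=
  fun u => if ∃ r : Fin m, (r : ℕ) + 1 < k ∧ w r = u.1 then L u.1 \ {j} else L u.1

/-- The neighbor `v_{r+1} = w r` of `v`, viewed as a node of `G_v`. -/
def nbVtx {V : Type} (G : SimpleGraph V) (v : V) {m : ℕ} (w : Fin m → V)
    (hnbr : ∀ u, G.Adj v u ↔ ∃ r, w r = u) (r : Fin m) : {u : V // u ≠ v} :=
  ⟨w r, ((hnbr (w r)).mpr ⟨r, rfl⟩).ne'⟩

/-!
A proper coloring of `(G, L)` avoids the color `j` on a set `S` of nodes exactly when it is a proper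
coloring of `(G, L')`, where `L'` arises from `L` by deleting `j` from the lists on `S`. Hence the
probability of avoiding `j` on `S` is the quotient `Z(G, L') / Z(G, L)`; in particular the `k`-th
factor of the product is `Z(G_v, L_{k+1,j}) / Z(G_v, L_{k,j})`, and the product telescopes.
-/

lemma mul_prod_range_div_of_ne_zero {K : Type*} [CommGroupWithZero K] {f : ℕ → K} {n : ℕ}
    (hf : ∀ k < n, f k ≠ 0) : f 0 * ∏ k ∈ Finset.range n, f (k + 1) / f k = f n := by
  induction n with
  | zero => simp
  | succ n ih =>
    rw [Finset.prod_range_succ, ← mul_assoc, ih fun k hk => hf k (hk.trans n.lt_succ_self),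
      mul_div_cancel₀ _ (hf n n.lt_succ_self)]

/-- The list vector obtained from `L` by deleting the color `j` from the list of every node in `S`;
passing to it conditions a uniform proper coloring on avoiding `j` throughout `S`. -/
noncomputable def eraseOn {V : Type*} (L : V → Finset ℕ) (S : Set V) (j : ℕ) : V → Finset ℕ :=
  fun x => if x ∈ S then (L x).erase j else L x

/-- The list vector `L_{k,j}` for an arbitrary sequence `u` of nodes, possibly with repetitions: the
color `j` is deleted at the first `k - 1` terms of `u`, so that `k` counts from `1` as in the paper
although `u` is indexed from `0`. -/
noncomputable def eraseBefore {V : Type*} (L : V → Finset ℕ) {m : ℕ} (u : Fin m → V) (k j : ℕ) :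
    V → Finset ℕ :=
  eraseOn L {x | ∃ r : Fin m, (r : ℕ) + 1 < k ∧ u r = x} j

section EraseOn

variable {V : Type*} (L : V → Finset ℕ) (j : ℕ)

lemma mem_eraseOn {S : Set V} {x : V} {i : ℕ} :
    i ∈ eraseOn L S j x ↔ i ∈ L x ∧ (x ∈ S → i ≠ j) := by
  by_cases hx : x ∈ S <;> simp [eraseOn, hx, and_comm]

lemma eraseOn_eraseOn (S T : Set V) : eraseOn (eraseOn L S j) T j = eraseOn L (S ∪ T) j := by
  ext x i
  simp only [mem_eraseOn, Set.mem_union, or_imp, and_assoc]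

variable {m : ℕ} (u : Fin m → V)

lemma eraseBefore_one : eraseBefore L u 1 j = L := by
  ext x i
  simp [eraseBefore, mem_eraseOn]

lemma eraseBefore_succ_length : eraseBefore L u (m + 1) j = eraseOn L (Set.range u) j := by
  simp [eraseBefore, Set.range]

lemma eraseOn_eraseBefore (k : Fin m) :
    eraseOn (eraseBefore L u (k + 1) j) {u k} j = eraseBefore L u (k + 2) j := by
  have preceding_union : {x | ∃ r : Fin m, (r : ℕ) + 1 < k + 1 ∧ u r = x} ∪ {u k} =
      {x | ∃ r : Fin m, (r : ℕ) + 1 < k + 2 ∧ u r = x} := by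
    ext x
    have lt_succ_iff (r : Fin m) : (r : ℕ) + 1 < k + 2 ↔ (r : ℕ) + 1 < k + 1 ∨ r = k := by omega
    simp only [lt_succ_iff, Set.mem_union, Set.mem_ofPred_eq, Set.mem_singleton_iff, or_and_right,
      exists_or, exists_eq_left, eq_comm (a := x)]
  rw [eraseBefore, eraseOn_eraseOn, preceding_union, eraseBefore]

end EraseOn

lemma Lki_eq_eraseBefore {V : Type} (G : SimpleGraph V) (L : V → Finset ℕ) (v : V) {m : ℕ}
    (w : Fin m → V) (hnbr : ∀ u, G.Adj v u ↔ ∃ r, w r = u) (k j : ℕ) :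
    Lki L v w k j = eraseBefore (fun x => L x.1) (nbVtx G v w hnbr) k j := by
  funext x
  simp only [Lki, eraseBefore, eraseOn, nbVtx, Subtype.ext_iff, Set.mem_ofPred_eq,
    Finset.sdiff_singleton_eq_erase]

section Colorings

variable {V : Type} (G : SimpleGraph V) (L : V → Finset ℕ)

lemma properColorings_eraseOn (S : Set V) (j : ℕ) :
    properColorings G (eraseOn L S j) = properColorings G L ∩ {c | ∀ x ∈ S, c x ≠ j} := by
  ext c
  simp only [properColorings, mem_eraseOn, forall_and, Set.mem_inter_iff, Set.mem_ofPred_eq]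
  exact and_right_comm

lemma colorProb_forall_mem_ne (S : Set V) (j : ℕ) :
    colorProb G L {c | ∀ x ∈ S, c x ≠ j} =
      (numColorings G (eraseOn L S j) : ℝ) / numColorings G L := by
  rw [colorProb, ← properColorings_eraseOn, ← numColorings]

lemma colorProb_ne (x : V) (j : ℕ) :
    colorProb G L {c | c x ≠ j} =
      (numColorings G (eraseOn L {x} j) : ℝ) / numColorings G L := by
  simpa only [Set.mem_singleton_iff, forall_eq] using colorProb_forall_mem_ne G L {x} j

lemma colorProb_compl {G : SimpleGraph V} {L : V → Finset ℕ} (hZ : 0 < numColorings G L)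
    (E : Set (V → ℕ)) : colorProb G L Eᶜ = 1 - colorProb G L E := by
  have card_split : (properColorings G L ∩ E).ncard + (properColorings G L ∩ Eᶜ).ncard =
      numColorings G L :=
    Set.ncard_inter_add_ncard_sdiff_eq_ncard _ _ (Set.finite_of_ncard_pos hZ)
  have hZ' : (numColorings G L : ℝ) ≠ 0 := mod_cast hZ.ne'
  rw [eq_sub_iff_add_eq', colorProb, colorProb, ← add_div, div_eq_one_iff_eq hZ']
  exact_mod_cast card_split

variable {m : ℕ} (u : Fin m → V) (j : ℕ)

lemma ncard_properColorings_inter_forall_ne (k : ℕ) :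
    (properColorings G L ∩ {c | ∀ r : Fin m, (r : ℕ) + 1 < k → c (u r) ≠ j}).ncard =
      numColorings G (eraseBefore L u k j) := by
  rw [numColorings, eraseBefore, properColorings_eraseOn]
  simp only [Set.mem_ofPred_eq, forall_exists_index, and_imp, forall_apply_eq_imp_iff₂]

lemma colorProb_forall_ne_eq_prod (hm : 1 ≤ m)
    (hZ : ∀ k, 1 ≤ k → k ≤ m → 0 < numColorings G (eraseBefore L u k j)) :
    colorProb G L {c | ∀ r, c (u r) ≠ j} =
      ∏ k : Fin m, colorProb G (eraseBefore L u (k + 1) j) {c | c (u k) ≠ j} := by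
  let Z (k : ℕ) : ℝ := numColorings G (eraseBefore L u (k + 1) j)
  have hZ_ne (k : ℕ) (hk : k < m) : Z k ≠ 0 :=
    Nat.cast_ne_zero.mpr (hZ (k + 1) k.succ_pos hk).ne'
  calc colorProb G L {c | ∀ r, c (u r) ≠ j}
    _ = Z m / Z 0 := by
      simpa only [Set.forall_mem_range, ← eraseBefore_succ_length, Z, zero_add, eraseBefore_one]
        using colorProb_forall_mem_ne G L (Set.range u) j
    _ = ∏ k ∈ Finset.range m, Z (k + 1) / Z k := by
      rw [← mul_prod_range_div_of_ne_zero hZ_ne, mul_div_cancel_left₀ _ (hZ_ne 0 hm)]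
    _ = ∏ k : Fin m, Z (k + 1) / Z k := (Fin.prod_univ_eq_prod_range _ m).symm
    _ = ∏ k : Fin m, colorProb G (eraseBefore L u (k + 1) j) {c | c (u k) ≠ j} := by
      simp only [colorProb_ne, eraseOn_eraseBefore, Z, add_assoc, one_add_one_eq_two]

end Colorings

theorem stmt4_general {V : Type} (G : SimpleGraph V) (L : V → Finset ℕ) (m : ℕ) (hm : 1 ≤ m)
    (u : Fin m → V) (j : ℕ)
    (hZ : ∀ k : ℕ, 1 ≤ k → k ≤ m → 0 < numColorings G (eraseBefore L u k j)) :
    (∀ k : ℕ, (properColorings G L ∩ {c | ∀ r : Fin m, (r : ℕ) + 1 < k → c (u r) ≠ j}).ncard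
      = numColorings G (eraseBefore L u k j)) ∧
    colorProb G L {c | ∀ r : Fin m, c (u r) ≠ j}
      = ∏ k : Fin m, colorProb G (eraseBefore L u ((k : ℕ) + 1) j) {c | c (u k) ≠ j} ∧
    colorProb G L {c | ∀ r : Fin m, c (u r) ≠ j}
      = ∏ k : Fin m, (1 - colorProb G (eraseBefore L u ((k : ℕ) + 1) j) {c | c (u k) = j}) := by
  have chain_rule := colorProb_forall_ne_eq_prod G L u j hm hZ
  refine ⟨ncard_properColorings_inter_forall_ne G L u j, chain_rule, ?_⟩
  rw [chain_rule]
  exact Finset.prod_congr rfl fun k _ => colorProb_compl (hZ _ (Nat.succ_pos k) k.isLt) _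

/-- Conditioning identity and telescoping: the number of proper list colorings of `(G_v, L)`
in which none of `v_1, …, v_{k-1}` gets the color `j` equals `Z(G_v, L_{k,j})`, and
`P_{G_v,L}(c(v_k) ≠ j, 1 ≤ k ≤ m) = ∏_k P_{G_v,L_{k,j}}(c(v_k) ≠ j)
 = ∏_k (1 − P_{G_v,L_{k,j}}(c(v_k) = j))`. -/
theorem stmt4 {V : Type} [Fintype V] (G : SimpleGraph V) (L : V → Finset ℕ)
    (v : V) (m : ℕ) (hm : 1 ≤ m) (w : Fin m → V) (hinj : Function.Injective w)
    (hnbr : ∀ u, G.Adj v u ↔ ∃ r, w r = u) (j : ℕ)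
    (hZk : ∀ k : ℕ, 1 ≤ k → k ≤ m → 0 < numColorings (Gdel G v) (Lki L v w k j)) :
    (∀ k : ℕ, 1 ≤ k → k ≤ m →
      (properColorings (Gdel G v) (fun u => L u.1) ∩
          {c | ∀ r : Fin m, (r : ℕ) + 1 < k → c (nbVtx G v w hnbr r) ≠ j}).ncard
        = numColorings (Gdel G v) (Lki L v w k j)) ∧
    colorProb (Gdel G v) (fun u => L u.1)
        {c | ∀ r : Fin m, c (nbVtx G v w hnbr r) ≠ j}
      = ∏ k : Fin m,
          colorProb (Gdel G v) (Lki L v w ((k : ℕ) + 1) j)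
            {c | c (nbVtx G v w hnbr k) ≠ j} ∧
    colorProb (Gdel G v) (fun u => L u.1)
        {c | ∀ r : Fin m, c (nbVtx G v w hnbr r) ≠ j}
      = ∏ k : Fin m,
          (1 - colorProb (Gdel G v) (Lki L v w ((k : ℕ) + 1) j)
            {c | c (nbVtx G v w hnbr k) = j}) := by
  simp only [Lki_eq_eraseBefore G L v w hnbr] at hZk ⊢
  exact (stmt4_general (Gdel G v) (fun x => L x.1) m hm (nbVtx G v w hnbr) j hZk).imp_left
    fun ncard_eq k _ _ => ncard_eq k
end

section
/- Let β ≥ 1 be a real number and let (G,L) be a graph/list pair such that |L(u)| ≥ Δ(u) + β for every node u, where Δ(u) is the degree of u in G. Then Z(G,L) > 0 and for every node v and every color i ∈ L(v): P_{G,L}(c(v)=i) ≤ 1/β. -/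
open scoped Classical

/-- The degree of a node `u` in `G`. -/
noncomputable def deg {V : Type} (G : SimpleGraph V) (u : V) : ℕ :=
  (G.neighborSet u).ncard

/-!
Given a proper coloring `c`, the node `v` can be recolored with any color of `L v` that `c` does not
use on the neighbors of `v`; at least `|L v| - Δ v` colors qualify. Recoloring one node at a time
yields a proper coloring greedily. Moreover, a proper coloring with `c v = i` is determined by its
values away from `v`, so recolorings of distinct such colorings are distinct. Hence
`(|L v| - Δ v) * Z(G, L, c v = i) ≤ Z(G, L)`.
-/

section ListColoring

variable {V : Type} {G : SimpleGraph V} {L : V → Finset ℕ}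

/-- The list colorings that are proper on the subgraph induced by `S`. Nodes outside `S` are colored
from their lists as well, without constraints along their edges, so that the partial colorings of
the greedy construction are total functions. -/
def properColoringsOn (G : SimpleGraph V) (L : V → Finset ℕ) (S : Set V) : Set (V → ℕ) :=
  {c | (∀ v, c v ∈ L v) ∧ S.Pairwise fun u w ↦ G.Adj u w → c u ≠ c w}

/-- The colors of `L v` that `c` leaves available at `v`, i.e. those that `c` does not use on a
neighbor of `v`: the colors with which `v` can be recolored. -/
noncomputable def availableColors (G : SimpleGraph V) (L : V → Finset ℕ) (c : V → ℕ) (v : V) :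
    Finset ℕ :=
  {j ∈ L v | ∀ w, G.Adj v w → c w ≠ j}

theorem properColoringsOn_univ : properColoringsOn G L Set.univ = properColorings G L := by
  ext c
  refine and_congr_right fun _ ↦ ⟨fun h u w huw ↦ ?_, fun h u _ w _ _ ↦ h u w⟩
  exact h (Set.mem_univ u) (Set.mem_univ w) huw.ne huw

theorem mem_availableColors {c : V → ℕ} {v : V} {j : ℕ} :
    j ∈ availableColors G L c v ↔ j ∈ L v ∧ ∀ w, G.Adj v w → c w ≠ j :=
  Finset.mem_filter

theorem update_mem_properColoringsOn_insert {S : Set V} {c : V → ℕ} {v : V} {j : ℕ}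
    (hc : c ∈ properColoringsOn G L S) (hj : j ∈ availableColors G L c v) :
    Function.update c v j ∈ properColoringsOn G L (insert v S) := by
  obtain ⟨hjL, hjN⟩ := mem_availableColors.mp hj
  refine ⟨fun u ↦ ?_, fun u hu w hw huw hadj ↦ ?_⟩
  · rcases eq_or_ne u v with rfl | hu
    · simpa using hjL
    · simpa [hu] using hc.1 u
  · rcases eq_or_ne u v with rfl | huv
    · simpa [huw.symm] using (hjN w hadj).symm
    · rcases eq_or_ne w v with rfl | hwv
      · simpa [huv] using hjN u hadj.symm
      · simpa [huv, hwv] using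
          hc.2 (Set.mem_of_mem_insert_of_ne hu huv) (Set.mem_of_mem_insert_of_ne hw hwv) huw hadj

theorem update_mem_properColorings {c : V → ℕ} {v : V} {j : ℕ}
    (hc : c ∈ properColorings G L) (hj : j ∈ availableColors G L c v) :
    Function.update c v j ∈ properColorings G L := by
  rw [← properColoringsOn_univ] at hc ⊢
  simpa only [Set.insert_eq_of_mem (Set.mem_univ v)] using update_mem_properColoringsOn_insert hc hj

theorem card_sub_deg_le_card_availableColors (L : V → Finset ℕ) (c : V → ℕ) (v : V)
    [Finite (G.neighborSet v)] :
    (L v).card - deg G v ≤ (availableColors G L c v).card := by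
  have hfin : (G.neighborSet v).Finite := Set.toFinite _
  have hcover : L v ⊆ hfin.toFinset.image c ∪ availableColors G L c v := by
    intro j hj
    by_cases hused : ∃ w, G.Adj v w ∧ c w = j
    · exact Finset.mem_union_left _ (by simpa using hused)
    · exact Finset.mem_union_right _ (mem_availableColors.mpr ⟨hj, by simpa using hused⟩)
  rw [Nat.sub_le_iff_le_add']
  calc (L v).card
      ≤ (hfin.toFinset.image c ∪ availableColors G L c v).card := Finset.card_le_card hcover
    _ ≤ (hfin.toFinset.image c).card + (availableColors G L c v).card := Finset.card_union_le _ _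
    _ ≤ deg G v + (availableColors G L c v).card := by
      rw [deg, Set.ncard_eq_toFinset_card _ hfin]
      gcongr
      exact Finset.card_image_le

theorem availableColors_nonempty {v : V} [Finite (G.neighborSet v)] (h : deg G v < (L v).card)
    (c : V → ℕ) : (availableColors G L c v).Nonempty :=
  Finset.card_pos.mp <|
    (Nat.sub_pos_of_lt h).trans_le (card_sub_deg_le_card_availableColors L c v)

theorem properColoringsOn_nonempty [∀ v, Finite (G.neighborSet v)]
    (h : ∀ u, deg G u < (L u).card) {S : Set V} (hS : S.Finite) :
    (properColoringsOn G L S).Nonempty := by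
  induction S, hS using Set.Finite.induction_on with
  | empty =>
    choose c hc using fun u ↦ Finset.card_pos.mp (Nat.zero_lt_of_lt (h u))
    exact ⟨c, hc, Set.pairwise_empty _⟩
  | @insert v _ _ _ ih =>
    obtain ⟨c, hc⟩ := ih
    obtain ⟨j, hj⟩ := availableColors_nonempty (h v) c
    exact ⟨_, update_mem_properColoringsOn_insert hc hj⟩

section Finite

variable [Finite V]

theorem finite_properColorings (G : SimpleGraph V) (L : V → Finset ℕ) :
    (properColorings G L).Finite :=
  (Set.Finite.pi' fun v ↦ (L v).finite_toSet).subset fun _ hc ↦ hc.1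

theorem numColorings_pos (h : ∀ u, deg G u < (L u).card) : 0 < numColorings G L := by
  rw [numColorings, Set.ncard_pos (finite_properColorings G L), ← properColoringsOn_univ]
  exact properColoringsOn_nonempty h Set.finite_univ

theorem card_sub_deg_mul_ncard_le_numColorings (G : SimpleGraph V) (L : V → Finset ℕ) (v : V)
    (i : ℕ) :
    ((L v).card - deg G v) * (properColorings G L ∩ {c | c v = i}).ncard ≤ numColorings G L := by
  have hP := finite_properColorings G L
  have hPi : (properColorings G L ∩ {c | c v = i}).Finite := hP.subset Set.inter_subset_left
  let AgreeAway (c c' : V → ℕ) : Prop := ∀ u ≠ v, c u = c' u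
  have habove : ∀ c ∈ hPi.toFinset,
      (L v).card - deg G v ≤ (hP.toFinset.bipartiteAbove AgreeAway c).card := by
    intro c hc
    refine (card_sub_deg_le_card_availableColors L c v).trans <|
      Finset.card_le_card_of_injOn (Function.update c v) (fun j hj ↦ ?_)
        (Function.update_injective c v).injOn
    have hc : c ∈ properColorings G L := (hPi.mem_toFinset.mp hc).1
    simpa [Finset.mem_bipartiteAbove, AgreeAway] using
      ⟨update_mem_properColorings hc hj, fun u hu ↦ by simp [hu]⟩
  have hbelow : ∀ c' ∈ hP.toFinset, (hPi.toFinset.bipartiteBelow AgreeAway c').card ≤ 1 := by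
    intro c' _
    refine Finset.card_le_one.mpr fun a ha b hb ↦ ?_
    obtain ⟨⟨-, hav⟩, hac⟩ : (_ ∧ a v = i) ∧ AgreeAway a c' := by simpa using ha
    obtain ⟨⟨-, hbv⟩, hbc⟩ : (_ ∧ b v = i) ∧ AgreeAway b c' := by simpa using hb
    funext u
    rcases eq_or_ne u v with rfl | hu
    · exact hav.trans hbv.symm
    · exact (hac u hu).trans (hbc u hu).symm
  have hcount := Finset.card_mul_le_card_mul AgreeAway habove hbelow
  rwa [mul_one, mul_comm, ← Set.ncard_eq_toFinset_card _ hPi,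
    ← Set.ncard_eq_toFinset_card _ hP] at hcount

theorem colorProb_le_one_div {v : V} {b : ℝ} (hb : 0 < b)
    (hL : deg G v + b ≤ (L v).card) (i : ℕ) : colorProb G L {c | c v = i} ≤ 1 / b := by
  have hdeg : deg G v ≤ (L v).card := by
    exact_mod_cast (le_add_of_nonneg_right hb.le).trans hL
  have hcount : ((L v).card - deg G v : ℝ) * (properColorings G L ∩ {c | c v = i}).ncard
      ≤ numColorings G L := by
    rw [← Nat.cast_sub hdeg]
    exact_mod_cast card_sub_deg_mul_ncard_le_numColorings G L v i
  refine div_le_of_le_mul₀ (Nat.cast_nonneg _) (by positivity) ?_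
  rw [one_div, le_inv_mul_iff₀ hb]
  exact le_trans (by gcongr; linarith) hcount

theorem stmt6_general {β : V → ℝ} (hβ : ∀ u, 0 < β u) (hL : ∀ u, deg G u + β u ≤ (L u).card) :
    0 < numColorings G L ∧ ∀ v i, colorProb G L {c | c v = i} ≤ 1 / β v := by
  have hdeg (u : V) : deg G u < (L u).card := by
    exact_mod_cast (lt_add_of_pos_right _ (hβ u)).trans_le (hL u)
  exact ⟨numColorings_pos hdeg, fun v ↦ colorProb_le_one_div (hβ v) (hL v)⟩

end Finite

end ListColoring

/-- If `|L(u)| ≥ Δ(u) + β` for every node `u` (with `β ≥ 1`), then `Z(G,L) > 0` and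
every marginal satisfies `P_{G,L}(c(v)=i) ≤ 1/β`. -/
theorem stmt6 {V : Type} [Fintype V] (β : ℝ) (hβ : 1 ≤ β)
    (G : SimpleGraph V) (L : V → Finset ℕ)
    (hL : ∀ u, (deg G u : ℝ) + β ≤ ((L u).card : ℝ)) :
    0 < numColorings G L ∧
    ∀ v, ∀ i ∈ L v, colorProb G L {c | c v = i} ≤ 1 / β := by
  have h := stmt6_general (β := fun _ ↦ β) (fun _ ↦ zero_lt_one.trans_le hβ) hL
  exact ⟨h.1, fun v i _ ↦ h.2 v i⟩
end
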